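/- arXiv:2304.13228 — 3 statements merged into one kernel-verified Lean document; each statement's English description precedes it below -/
import Mathlib

section
/- Let G = (V,E) be a finite simple connected graph with minimum degree at least 2 and |V| ≥ 4, and let M ⊆ E be a triangle-free 2-matching of G. Then there exists a triangle-free 2-edge-cover C ⊆ E of G with |C| ≤ 2|V| − |M|. -/
namespace ECSS

variable {V : Type*}

/-- The spanning subgraph of the vertex type `V` determined by an edge set `F`,
viewed as a simple graph on `V`. -/
def graphOf (F : Finset (Sym2 V)) : SimpleGraph V :=
  SimpleGraph.fromEdgeSet (F : Set (Sym2 V))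

/-- `d_F(v)`: the number of edges of the edge set `F` incident to the vertex `v`. -/
noncomputable def degIn (F : Finset (Sym2 V)) (v : V) : ℕ :=
  {e ∈ (F : Set (Sym2 V)) | v ∈ e}.ncard

/-- `F` is a 2-matching: every vertex is incident to at most 2 edges of `F`. -/
def IsTwoMatching (F : Finset (Sym2 V)) : Prop :=
  ∀ v : V, degIn F v ≤ 2

/-- `F` is a 2-edge-cover: every vertex is incident to at least 2 edges of `F`. -/
def IsTwoEdgeCover (F : Finset (Sym2 V)) : Prop :=
  ∀ v : V, 2 ≤ degIn F v

/-- The vertices `u, v, w` form a triangle 2EC component of the edge set `F`: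
they are pairwise distinct, the three edges joining them all belong to `F`, and no
other edge of `F` is incident to any of them (so `{u, v, w}` is a connected
component of `(V, F)` which is a cycle of length 3). -/
def IsTriangleComponent (F : Finset (Sym2 V)) (u v w : V) : Prop :=
  u ≠ v ∧ u ≠ w ∧ v ≠ w ∧
  s(u, v) ∈ F ∧ s(u, w) ∈ F ∧ s(v, w) ∈ F ∧
  ∀ e ∈ F, (u ∈ e ∨ v ∈ e ∨ w ∈ e) → e = s(u, v) ∨ e = s(u, w) ∨ e = s(v, w)

/-- An edge set `F` is triangle-free if it has no triangle 2EC component. -/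
def TriangleFree (F : Finset (Sym2 V)) : Prop :=
  ¬ ∃ u v w : V, IsTriangleComponent F u v w

/-- A graph is 2-edge-connected if it has at least two vertices and remains
connected after deleting any single edge. -/
def TwoEdgeConnected {α : Type*} (G : SimpleGraph α) : Prop :=
  2 ≤ Nat.card α ∧ G.Connected ∧ ∀ e ∈ G.edgeSet, (G.deleteEdges {e}).Connected

/-- A graph is a cycle if it is connected and every vertex has degree exactly 2. -/
def IsCycleGraph {α : Type*} (G : SimpleGraph α) : Prop :=
  G.Connected ∧ ∀ v : α, (G.neighborSet v).ncard = 2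

/-!
Measure an edge set `F` by `|F| + ∑ v, (2 - d_F(v)) + #(triangle components of F)`. For a
triangle-free 2-matching `M` this equals `2|V| - |M|`, since `∑ v, d_M(v) = 2|M|`, while for every
`F` it is at least `|F|`. Starting from `M`, add edges of `G` one at a time without increasing the
measure, until no such edge is left.

* An edge added at a vertex of degree less than 2 lowers the degree deficiency. It creates at most
  one triangle component, and only if its other end had degree 1, so that the deficiency drops by 2.
* An edge of `G` that meets a triangle component of a 2-edge-cover without belonging to it destroys
  that component when added, and creates no other, because its ends now have degree at least 3.

So the process can only stop at a triangle-free 2-edge-cover.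
-/

section EdgeSets

variable {F D E : Finset (Sym2 V)} {e : Sym2 V} {s t : Set V} {a v : V}

theorem degIn_eq_card_filter [DecidableEq V] (F : Finset (Sym2 V)) (v : V) :
    degIn F v = (F.filter (v ∈ ·)).card := by
  rw [degIn, ← Set.ncard_coe_finset, Finset.coe_filter]
  rfl

theorem degIn_insert [DecidableEq V] (he : e ∉ D) (v : V) :
    degIn (insert e D) v = degIn D v + if v ∈ e then 1 else 0 := by
  rw [degIn_eq_card_filter, degIn_eq_card_filter, Finset.filter_insert]
  split_ifs
  · exact Finset.card_insert_of_notMem fun h => he (Finset.mem_filter.1 h).1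
  · rfl

theorem degIn_insert_of_mem [DecidableEq V] (he : e ∉ D) (hv : v ∈ e) :
    degIn (insert e D) v = degIn D v + 1 := by
  rw [degIn_insert he, if_pos hv]

theorem exists_mem_notMem_of_degIn_lt (h : degIn D v < degIn E v) :
    ∃ e ∈ E, e ∉ D ∧ v ∈ e := by
  obtain ⟨e, ⟨heE, hve⟩, heD⟩ := Set.exists_mem_notMem_of_ncard_lt_ncard h
  exact ⟨e, heE, fun he => heD ⟨he, hve⟩, hve⟩

theorem sum_degIn_eq_twice_card [Fintype V] (hF : ∀ e ∈ F, ¬ e.IsDiag) :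
    ∑ v, degIn F v = 2 * F.card := by
  classical
  calc ∑ v, degIn F v
      = ∑ v, (F.filter (v ∈ ·)).card := Finset.sum_congr rfl fun v _ => degIn_eq_card_filter F v
    _ = ∑ e ∈ F, (Finset.univ.filter (· ∈ e)).card :=
        Finset.sum_card_bipartiteAbove_eq_sum_card_bipartiteBelow _
    _ = ∑ e ∈ F, 2 := Finset.sum_congr rfl fun e he => by
        rw [← Sym2.card_toFinset_of_not_isDiag e (hF e he)]
        congr 1
        ext v
        simp only [Finset.mem_filter_univ, Sym2.mem_toFinset]
    _ = 2 * F.card := by rw [Finset.sum_const, smul_eq_mul, mul_comm]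

/-- `s` is the vertex set of a triangle component of `F`. Unlike `IsTriangleComponent`, this does
not order the three vertices, so that components can be counted. -/
def IsTriangleSupport (F : Finset (Sym2 V)) (s : Set V) : Prop :=
  s.ncard = 3 ∧ ∀ a ∈ s, ∀ b, s(a, b) ∈ F ↔ b ∈ s ∧ a ≠ b

theorem IsTriangleComponent.isTriangleSupport {u v w : V} (h : IsTriangleComponent F u v w) :
    IsTriangleSupport F {u, v, w} := by
  obtain ⟨huv, huw, hvw, huv_mem, huw_mem, hvw_mem, hclosed⟩ := h
  refine ⟨Set.ncard_eq_three.2 ⟨u, v, w, huv, huw, hvw, rfl⟩, fun a ha b => ⟨fun hab => ?_, ?_⟩⟩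
  · have hmeets : u ∈ s(a, b) ∨ v ∈ s(a, b) ∨ w ∈ s(a, b) := by
      rcases ha with rfl | rfl | rfl <;> simp
    have := hclosed _ hab hmeets
    grind [Sym2.eq_iff]
  · grind [Sym2.eq_swap]

theorem IsTriangleSupport.exists_isTriangleComponent (h : IsTriangleSupport F s) :
    ∃ u v w, IsTriangleComponent F u v w := by
  obtain ⟨hcard, hadj⟩ := h
  obtain ⟨u, v, w, huv, huw, hvw, rfl⟩ := Set.ncard_eq_three.1 hcard
  refine ⟨u, v, w, huv, huw, hvw, (hadj u (by simp) v).2 ⟨by simp, huv⟩,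
    (hadj u (by simp) w).2 ⟨by simp, huw⟩, (hadj v (by simp) w).2 ⟨by simp, hvw⟩, ?_⟩
  have hedge : ∀ x ∈ ({u, v, w} : Set V), ∀ e ∈ F, x ∈ e →
      e = s(u, v) ∨ e = s(u, w) ∨ e = s(v, w) := by
    rintro x hx _ he ⟨y, rfl⟩
    have := (hadj x hx y).1 he
    grind [Sym2.eq_swap]
  rintro e he (hu | hv | hw)
  · exact hedge u (by simp) e he hu
  · exact hedge v (by simp) e he hv
  · exact hedge w (by simp) e he hw

theorem triangleFree_iff_forall_not_isTriangleSupport :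
    TriangleFree F ↔ ∀ s, ¬ IsTriangleSupport F s :=
  ⟨fun hF _ hs => hF hs.exists_isTriangleComponent,
    fun hF ⟨_, _, _, h⟩ => hF _ h.isTriangleSupport⟩

namespace IsTriangleSupport

theorem mem_of_mem_edge (hs : IsTriangleSupport F s) (he : e ∈ F) (ha : a ∈ s) (hae : a ∈ e)
    (hve : v ∈ e) : v ∈ s := by
  obtain ⟨b, rfl⟩ := hae
  rcases Sym2.mem_iff.1 hve with rfl | rfl
  · exact ha
  · exact ((hs.2 a ha v).1 he).1

theorem not_isDiag (hs : IsTriangleSupport F s) (he : e ∈ F) (ha : a ∈ s) (hae : a ∈ e) :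
    ¬ e.IsDiag := by
  obtain ⟨b, rfl⟩ := hae
  exact Sym2.mk_isDiag_iff.not.2 ((hs.2 a ha b).1 he).2

theorem mem_iff (hs : IsTriangleSupport F s) (ha : a ∈ s) : v ∈ s ↔ v = a ∨ s(a, v) ∈ F := by
  grind [hs.2 a ha v]

theorem eq_of_mem (hs : IsTriangleSupport F s) (ht : IsTriangleSupport F t) (has : a ∈ s)
    (hat : a ∈ t) : s = t :=
  Set.ext fun _ => (hs.mem_iff has).trans (ht.mem_iff hat).symm

theorem degIn_eq_two (hs : IsTriangleSupport F s) (ha : a ∈ s) : degIn F a = 2 := by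
  have hstar : {e ∈ (F : Set (Sym2 V)) | a ∈ e} = (s(a, ·)) '' (s \ {a}) := by
    ext e
    constructor
    · rintro ⟨he, b, rfl⟩
      obtain ⟨hb, hab⟩ := (hs.2 a ha b).1 he
      exact ⟨b, ⟨hb, hab.symm⟩, rfl⟩
    · rintro ⟨b, ⟨hb, hba⟩, rfl⟩
      exact ⟨(hs.2 a ha b).2 ⟨hb, Ne.symm hba⟩, Sym2.mem_mk_left a b⟩
  rw [degIn, hstar, Set.ncard_image_of_injective _ fun _ _ => Sym2.congr_right.1,
    Set.ncard_sdiff_singleton_of_mem ha, hs.1]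

theorem of_insert [DecidableEq V] (hs : IsTriangleSupport (insert e D) s)
    (he : ∀ v ∈ e, v ∉ s) : IsTriangleSupport D s := by
  refine ⟨hs.1, fun a ha b => ?_⟩
  have hne : s(a, b) ≠ e := fun h => he a (h ▸ Sym2.mem_mk_left a b) ha
  rw [← hs.2 a ha b, Finset.mem_insert, or_iff_right hne]

theorem exists_mem_notMem (hs : IsTriangleSupport D s) (hDE : D ⊆ E)
    (hE : ¬ IsTriangleSupport E s) : ∃ e ∈ E, e ∉ D ∧ ∃ a ∈ s, a ∈ e := by
  by_contra! h
  refine hE ⟨hs.1, fun a ha b => ⟨fun hab => (hs.2 a ha b).1 ?_, fun hb => ?_⟩⟩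
  · by_contra hD
    exact h _ hab hD a ha (Sym2.mem_mk_left a b)
  · exact hDE ((hs.2 a ha b).2 hb)

end IsTriangleSupport

/-- The number of triangle components of `F`, counted by their vertex sets. -/
noncomputable def numTriangles (F : Finset (Sym2 V)) : ℕ :=
  {s | IsTriangleSupport F s}.ncard

theorem TriangleFree.numTriangles_eq_zero (hF : TriangleFree F) : numTriangles F = 0 := by
  have hempty : {s | IsTriangleSupport F s} = ∅ :=
    Set.eq_empty_of_forall_notMem (triangleFree_iff_forall_not_isTriangleSupport.1 hF)
  rw [numTriangles, hempty, Set.ncard_empty]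

theorem numTriangles_insert_le_of_forall_notMem [Finite V] [DecidableEq V]
    (h : ∀ s, IsTriangleSupport (insert e D) s → ∀ v ∈ e, v ∉ s) :
    numTriangles (insert e D) ≤ numTriangles D :=
  Set.ncard_le_ncard fun s hs => hs.of_insert (h s hs)

-- A triangle component of `insert e D` that is not one of `D` contains all of `e`.
theorem numTriangles_insert_le [Finite V] [DecidableEq V] :
    numTriangles (insert e D) ≤ numTriangles D + 1 := by
  by_cases h : ∃ s, IsTriangleSupport (insert e D) s ∧ ∃ v ∈ e, v ∈ s
  · obtain ⟨s, hs, v, hve, hvs⟩ := h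
    have hsub : {t | IsTriangleSupport (insert e D) t} ⊆ insert s {t | IsTriangleSupport D t} := by
      intro t ht
      by_cases hvt : v ∈ t
      · exact .inl (ht.eq_of_mem hs hvt hvs)
      · exact .inr (ht.of_insert fun a hae hat =>
          hvt (ht.mem_of_mem_edge (Finset.mem_insert_self e D) hat hae hve))
    exact (Set.ncard_le_ncard hsub).trans (Set.ncard_insert_le s _)
  · push Not at h
    exact (numTriangles_insert_le_of_forall_notMem h).trans (Nat.le_succ _)

theorem numTriangles_insert_lt [Finite V] [DecidableEq V] (hD : IsTwoEdgeCover D) (he : e ∉ D)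
    (hs : IsTriangleSupport D s) (ha : a ∈ s) (hae : a ∈ e) :
    numTriangles (insert e D) < numTriangles D := by
  have havoid : ∀ t, IsTriangleSupport (insert e D) t → ∀ v ∈ e, v ∉ t := by
    intro t ht v hve hvt
    have hdeg := ht.degIn_eq_two hvt
    rw [degIn_insert_of_mem he hve] at hdeg
    have := hD v
    omega
  refine Set.ncard_lt_ncard ⟨fun t ht => ht.of_insert (havoid t ht), fun hsub => ?_⟩
  exact havoid s (hsub hs) a hae ha

variable [Fintype V]

/-- The total amount by which the degrees in `F` fall short of 2; the truncated subtraction makes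
vertices of degree greater than 2 contribute 0. -/
noncomputable def deficiency (F : Finset (Sym2 V)) : ℕ :=
  ∑ v, (2 - degIn F v)

theorem deficiency_insert [DecidableEq V] (he : e ∉ D) :
    deficiency D =
      deficiency (insert e D) + (Finset.univ.filter fun v => v ∈ e ∧ degIn D v < 2).card := by
  rw [deficiency, deficiency, Finset.card_filter, ← Finset.sum_add_distrib]
  refine Finset.sum_congr rfl fun v _ => ?_
  rw [degIn_insert he]
  grind

theorem deficiency_insert_lt [DecidableEq V] (he : e ∉ D) (hae : a ∈ e) (ha : degIn D a < 2) :
    deficiency (insert e D) < deficiency D := by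
  have hpos : 0 < (Finset.univ.filter fun v => v ∈ e ∧ degIn D v < 2).card :=
    Finset.card_pos.2 ⟨a, (Finset.mem_filter_univ a).2 ⟨hae, ha⟩⟩
  rw [deficiency_insert he]
  exact Nat.lt_add_of_pos_right hpos

theorem deficiency_insert_add_two [DecidableEq V] (he : e ∉ D) (hdiag : ¬ e.IsDiag)
    (hdeg : ∀ v ∈ e, degIn D v < 2) : deficiency (insert e D) + 2 = deficiency D := by
  have hends : (Finset.univ.filter fun v => v ∈ e ∧ degIn D v < 2) = e.toFinset := by
    ext v
    rw [Finset.mem_filter_univ, Sym2.mem_toFinset, and_iff_left_of_imp (hdeg v)]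
  rw [deficiency_insert he, hends, Sym2.card_toFinset_of_not_isDiag e hdiag]

theorem IsTwoMatching.deficiency_add_sum_degIn (hF : IsTwoMatching F) :
    deficiency F + ∑ v, degIn F v = 2 * Fintype.card V := by
  rw [deficiency, ← Finset.sum_add_distrib,
    Finset.sum_congr rfl fun v _ => Nat.sub_add_cancel (hF v), Finset.sum_const, smul_eq_mul,
    mul_comm, Finset.card_univ]

/-- The measure that does not increase while edges are added: the size of `F` plus its defects
as a triangle-free 2-edge-cover. -/
noncomputable def potential (F : Finset (Sym2 V)) : ℕ :=
  F.card + deficiency F + numTriangles F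

theorem card_le_potential (F : Finset (Sym2 V)) : F.card ≤ potential F := by
  rw [potential, add_assoc]
  exact Nat.le_add_right _ _

theorem IsTwoMatching.potential_eq (hF : IsTwoMatching F) (hdiag : ∀ e ∈ F, ¬ e.IsDiag)
    (htf : TriangleFree F) : potential F = 2 * Fintype.card V - F.card := by
  have hdef := hF.deficiency_add_sum_degIn
  rw [sum_degIn_eq_twice_card hdiag] at hdef
  rw [potential, htf.numTriangles_eq_zero]
  omega

theorem potential_insert_le_of_degIn_lt [DecidableEq V] (he : e ∉ D) (hae : a ∈ e)
    (ha : degIn D a < 2) : potential (insert e D) ≤ potential D := by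
  rw [potential, potential, Finset.card_insert_of_notMem he]
  by_cases h : ∃ s, IsTriangleSupport (insert e D) s ∧ ∃ v ∈ e, v ∈ s
  · obtain ⟨s, hs, v, hve, hvs⟩ := h
    have hmem := Finset.mem_insert_self e D
    have hdeg : ∀ b ∈ e, degIn D b < 2 := by
      intro b hbe
      have hb := hs.degIn_eq_two (hs.mem_of_mem_edge hmem hvs hve hbe)
      rw [degIn_insert_of_mem he hbe] at hb
      omega
    have hdef := deficiency_insert_add_two he (hs.not_isDiag hmem hvs hve) hdeg
    have htri := numTriangles_insert_le (e := e) (D := D)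
    omega
  · push Not at h
    have hdef := deficiency_insert_lt he hae ha
    have htri := numTriangles_insert_le_of_forall_notMem h
    omega

theorem potential_insert_le_of_isTriangleSupport [DecidableEq V] (hD : IsTwoEdgeCover D)
    (he : e ∉ D) (hs : IsTriangleSupport D s) (ha : a ∈ s) (hae : a ∈ e) :
    potential (insert e D) ≤ potential D := by
  have hdef := deficiency_insert he
  have htri := numTriangles_insert_lt hD he hs ha hae
  rw [potential, potential, Finset.card_insert_of_notMem he]
  omega

theorem exists_triangleFree_twoEdgeCover_card_le_potential (hE : IsTwoEdgeCover E)
    (hEtf : TriangleFree E) (hFE : F ⊆ E) :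
    ∃ C, F ⊆ C ∧ C ⊆ E ∧ IsTwoEdgeCover C ∧ TriangleFree C ∧ C.card ≤ potential F := by
  classical
  obtain ⟨C, hFC, hCmax⟩ := (Set.toFinite {D | D ⊆ E ∧ potential D ≤ potential F}).exists_le_maximal
    ⟨hFE, le_rfl⟩
  obtain ⟨hCE, hCF⟩ := hCmax.prop
  have hstuck : ∀ e ∈ E, e ∉ C → ¬ potential (insert e C) ≤ potential C := fun e heE heC hle =>
    heC (hCmax.le_of_ge ⟨Finset.insert_subset heE hCE, hle.trans hCF⟩ (Finset.subset_insert e C)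
      (Finset.mem_insert_self e C))
  have hcover : IsTwoEdgeCover C := by
    intro v
    by_contra! hv
    obtain ⟨e, heE, heC, hve⟩ := exists_mem_notMem_of_degIn_lt (hv.trans_le (hE v))
    exact hstuck e heE heC (potential_insert_le_of_degIn_lt heC hve hv)
  have htf : TriangleFree C := triangleFree_iff_forall_not_isTriangleSupport.2 fun s hs => by
    obtain ⟨e, heE, heC, a, has, hae⟩ :=
      hs.exists_mem_notMem hCE (triangleFree_iff_forall_not_isTriangleSupport.1 hEtf s)
    exact hstuck e heE heC (potential_insert_le_of_isTriangleSupport hcover heC hs has hae)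
  exact ⟨C, hFC, hCE, hcover, htf, (card_le_potential C).trans hCF⟩

end EdgeSets

section Graphs

variable {G : SimpleGraph V} [Fintype G.edgeSet]

theorem degIn_edgeFinset (v : V) : degIn G.edgeFinset v = (G.neighborSet v).ncard := by
  classical
  rw [degIn, SimpleGraph.coe_edgeFinset]
  exact Nat.card_congr (G.incidenceSetEquivNeighborSet v)

theorem triangleFree_edgeFinset_of_connected (hG : G.Connected) (hV : Nat.card V ≠ 3) :
    TriangleFree G.edgeFinset := by
  refine triangleFree_iff_forall_not_isTriangleSupport.2 fun s hs => hV ?_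
  obtain ⟨u, hu⟩ : s.Nonempty := Set.nonempty_of_ncard_ne_zero (by rw [hs.1]; decide)
  have huniv : s = Set.univ := by
    refine Set.eq_univ_of_forall fun z => by_contra fun hz => ?_
    obtain ⟨p⟩ := hG.preconnected u z
    obtain ⟨d, -, hfst, hsnd⟩ := p.exists_boundary_dart s hu hz
    exact hsnd ((hs.2 _ hfst _).1 (SimpleGraph.mem_edgeFinset.2 d.adj)).1
  rw [← Set.ncard_univ, ← huniv, hs.1]

theorem triangleFree_twoEdgeCover_of_twoMatching_general [Fintype V] (G : SimpleGraph V)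
    [Fintype G.edgeSet]
    (hmin : ∀ v : V, 2 ≤ (G.neighborSet v).ncard) (hG : TriangleFree G.edgeFinset)
    (M : Finset (Sym2 V)) (hMsub : (M : Set (Sym2 V)) ⊆ G.edgeSet)
    (hM2 : IsTwoMatching M) (hMtf : TriangleFree M) :
    ∃ C : Finset (Sym2 V), M ⊆ C ∧ (C : Set (Sym2 V)) ⊆ G.edgeSet ∧
      IsTwoEdgeCover C ∧ TriangleFree C ∧
      C.card ≤ 2 * Fintype.card V - M.card := by
  have hcover : IsTwoEdgeCover G.edgeFinset := fun v =>
    (hmin v).trans_eq (degIn_edgeFinset v).symm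
  have hMG : M ⊆ G.edgeFinset := fun _ he => SimpleGraph.mem_edgeFinset.2 (hMsub he)
  have hdiag : ∀ e ∈ M, ¬ e.IsDiag := fun e he => G.not_isDiag_of_mem_edgeSet (hMsub he)
  obtain ⟨C, hMC, hCG, hC, hCtf, hcard⟩ :=
    exists_triangleFree_twoEdgeCover_card_le_potential hcover hG hMG
  exact ⟨C, hMC, fun _ he => SimpleGraph.mem_edgeFinset.1 (hCG he), hC, hCtf,
    hcard.trans_eq (hM2.potential_eq hdiag hMtf)⟩

end Graphs

/-- If `G` is a finite simple connected graph with minimum degree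
at least 2 and at least 4 vertices, and `M ⊆ E(G)` is a triangle-free 2-matching,
then `G` has a triangle-free 2-edge-cover `C ⊆ E(G)` with `|C| ≤ 2|V| - |M|`. -/
theorem triangleFree_twoEdgeCover_of_twoMatching
    {V : Type*} [Fintype V] (G : SimpleGraph V)
    (hconn : G.Connected)
    (hmin : ∀ v : V, 2 ≤ (G.neighborSet v).ncard)
    (hV : 4 ≤ Fintype.card V)
    (M : Finset (Sym2 V)) (hMsub : (M : Set (Sym2 V)) ⊆ G.edgeSet)
    (hM2 : IsTwoMatching M) (hMtf : TriangleFree M) :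
    ∃ C : Finset (Sym2 V), (C : Set (Sym2 V)) ⊆ G.edgeSet ∧
      IsTwoEdgeCover C ∧ TriangleFree C ∧
      C.card ≤ 2 * Fintype.card V - M.card := by
  classical
  have hG := triangleFree_edgeFinset_of_connected hconn (by rw [Nat.card_eq_fintype_card]; omega)
  exact (triangleFree_twoEdgeCover_of_twoMatching_general G hmin hG M hMsub hM2 hMtf).imp
    fun _ hC => hC.2

end ECSS
end

section
/- Let G = (V,E) be a finite simple connected graph with minimum degree at least 2 and |V| ≥ 4, and suppose G has a 2-edge-connected spanning subgraph. Then every 2-edge-connected spanning subgraph H of G satisfies |E(H)| ≥ 2|V| − ν, where ν is the maximum size of a triangle-free 2-matching of G. -/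
namespace ECSS

variable {V : Type*}

/-!
Delete edges one at a time from a triangle-free 2-edge-cover `H`, each time an edge at a vertex of
degree at least 3, until a 2-matching `M` is left. If deleting such an edge `ax` isolates a triangle
`abc`, then deleting `ab` instead does not, so the edge sets can be kept triangle-free. Every
deletion lowers `∑ v, (d(v) - 2)`, which for `H` equals `2|H| - 2|V|`; hence
`|H| - |M| ≤ 2|H| - 2|V|`, that is, `2|V| - |M| ≤ |H|`. A 2-edge-connected spanning subgraph on at
least four vertices is a triangle-free 2-edge-cover.
-/

open Finset

theorem degIn_mono {F F' : Finset (Sym2 V)} (h : F ⊆ F') (v : V) : degIn F v ≤ degIn F' v :=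
  Set.ncard_le_ncard (fun _ he ↦ ⟨h he.1, he.2⟩) (F'.finite_toSet.sep _)

theorem degIn_pos {F : Finset (Sym2 V)} {v : V} : 0 < degIn F v ↔ ∃ e ∈ F, v ∈ e :=
  Set.ncard_pos (F.finite_toSet.sep _)

theorem degIn_erase_add_one [DecidableEq V] {F : Finset (Sym2 V)} {e : Sym2 V} {v : V}
    (he : e ∈ F) (hv : v ∈ e) : degIn (F.erase e) v + 1 = degIn F v := by
  have hset : {f ∈ (↑(F.erase e) : Set (Sym2 V)) | v ∈ f} =
      {f ∈ (F : Set (Sym2 V)) | v ∈ f} \ {e} := by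
    ext f
    simp only [coe_erase, Set.mem_sdiff, Set.mem_ofPred_eq]
    tauto
  rw [degIn, hset]
  exact Set.ncard_sdiff_singleton_add_one ⟨he, hv⟩ (F.finite_toSet.sep _)

theorem degIn_erase_of_notMem [DecidableEq V] (F : Finset (Sym2 V)) {e : Sym2 V} {v : V}
    (hv : v ∉ e) : degIn (F.erase e) v = degIn F v := by
  refine congrArg Set.ncard (Set.ext fun f ↦ ?_)
  have hne : v ∈ f → f ≠ e := fun hf h ↦ hv (h ▸ hf)
  simp only [coe_erase, Set.mem_sdiff, Set.mem_singleton_iff, Set.mem_ofPred_eq]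
  tauto

theorem sum_degIn_le_two_mul_card [Fintype V] (F : Finset (Sym2 V)) :
    ∑ v, degIn F v ≤ 2 * #F := by
  classical
  have hdeg (v : V) : degIn F v = #{e ∈ F | v ∈ e} := by
    rw [degIn, ← Set.ncard_coe_finset, coe_filter]
    rfl
  have hends (e : Sym2 V) : #{v | v ∈ e} ≤ 2 := by
    induction e with
    | _ x y =>
      refine (card_le_card fun v hv ↦ ?_).trans (card_le_two (a := x) (b := y))
      simpa using hv
  calc ∑ v, degIn F v = ∑ v, #{e ∈ F | v ∈ e} := by simp only [hdeg]
    _ = ∑ e ∈ F, #{v | v ∈ e} := sum_card_bipartiteAbove_eq_sum_card_bipartiteBelow _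
    _ ≤ 2 * #F := by simpa [mul_comm] using sum_le_card_nsmul F _ 2 fun e _ ↦ hends e

/-- The total excess `∑ v, (d_F(v) - 2)` of the degrees of `F` over 2. The subtraction is truncated,
so that vertices of degree below 2 contribute 0. -/
noncomputable def excess [Fintype V] (F : Finset (Sym2 V)) : ℕ :=
  ∑ v, (degIn F v - 2)

theorem excess_erase_lt [Fintype V] [DecidableEq V] {F : Finset (Sym2 V)} {e : Sym2 V} {v : V}
    (he : e ∈ F) (hv : v ∈ e) (hdeg : 3 ≤ degIn F v) : excess (F.erase e) < excess F := by
  refine sum_lt_sum (fun w _ ↦ Nat.sub_le_sub_right (degIn_mono (erase_subset e F) w) 2)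
    ⟨v, mem_univ v, ?_⟩
  have := degIn_erase_add_one he hv
  lia

theorem IsTwoEdgeCover.excess_add_two_mul_card_le [Fintype V] {F : Finset (Sym2 V)}
    (hF : IsTwoEdgeCover F) : excess F + 2 * Fintype.card V ≤ 2 * #F :=
  calc excess F + 2 * Fintype.card V = ∑ v, (degIn F v - 2 + 2) := by
        simp [excess, sum_add_distrib, mul_comm]
    _ = ∑ v, degIn F v := sum_congr rfl fun v _ ↦ Nat.sub_add_cancel (hF v)
    _ ≤ 2 * #F := sum_degIn_le_two_mul_card F

namespace IsTriangleComponent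

variable {F : Finset (Sym2 V)} {e : Sym2 V} {u v w x y : V}

theorem rotate (h : IsTriangleComponent F u v w) : IsTriangleComponent F v w u := by
  obtain ⟨huv, huw, hvw, euv, euw, evw, hmax⟩ := h
  refine ⟨hvw, huv.symm, huw.symm, evw, Sym2.eq_swap ▸ euv, Sym2.eq_swap ▸ euw, fun e he hmem ↦ ?_⟩
  rw [Sym2.eq_swap (a := v) (b := u), Sym2.eq_swap (a := w) (b := u)]
  have := hmax e he
  tauto

theorem exists_of_mem (h : IsTriangleComponent F u v w) (hx : x ∈ ({u, v, w} : Set V)) :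
    ∃ y z, IsTriangleComponent F x y z := by
  obtain rfl | rfl | rfl := hx
  exacts [⟨_, _, h⟩, ⟨_, _, h.rotate⟩, ⟨_, _, h.rotate.rotate⟩]

theorem mem_of_edge_mem (h : IsTriangleComponent F u v w) (hx : x ∈ ({u, v, w} : Set V))
    (hxy : s(x, y) ∈ F) : y ∈ ({u, v, w} : Set V) := by
  obtain ⟨-, -, -, -, -, -, hmax⟩ := h
  have hedge := hmax s(x, y) hxy (by obtain rfl | rfl | rfl := hx <;> simp)
  simp only [Sym2.eq_iff] at hedge
  simp only [Set.mem_insert_iff, Set.mem_singleton_iff]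
  tauto

theorem degIn_left_eq_two (h : IsTriangleComponent F u v w) : degIn F u = 2 := by
  obtain ⟨huv, huw, hvw, euv, euw, -, hmax⟩ := h
  have hset : {e ∈ (F : Set (Sym2 V)) | u ∈ e} = {s(u, v), s(u, w)} := by
    ext e
    constructor
    · rintro ⟨he, hu⟩
      obtain rfl | rfl | rfl := hmax e he (.inl hu)
      · simp
      · simp
      · simp [huv, huw] at hu
    · rintro (rfl | rfl)
      · exact ⟨euv, Sym2.mem_mk_left u v⟩
      · exact ⟨euw, Sym2.mem_mk_left u w⟩
  rw [degIn, hset, Set.ncard_pair fun heq ↦ hvw (Sym2.congr_right.mp heq)]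

theorem degIn_eq_two_of_mem (h : IsTriangleComponent F u v w) (hx : x ∈ ({u, v, w} : Set V)) :
    degIn F x = 2 :=
  let ⟨_, _, hxyz⟩ := h.exists_of_mem hx
  hxyz.degIn_left_eq_two

theorem of_erase [DecidableEq V] (h : IsTriangleComponent (F.erase e) u v w)
    (he : ∀ x ∈ ({u, v, w} : Set V), x ∉ e) : IsTriangleComponent F u v w := by
  obtain ⟨huv, huw, hvw, euv, euw, evw, hmax⟩ := h
  refine ⟨huv, huw, hvw, mem_of_mem_erase euv, mem_of_mem_erase euw, mem_of_mem_erase evw,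
    fun f hf hmem ↦ hmax f (mem_erase.mpr ⟨?_, hf⟩) hmem⟩
  rintro rfl
  obtain hu | hv | hw := hmem
  exacts [he u (by simp) hu, he v (by simp) hv, he w (by simp) hw]

end IsTriangleComponent

namespace TriangleFree

variable {F : Finset (Sym2 V)}

theorem exists_mem_of_erase [DecidableEq V] {e : Sym2 V} {u v w : V} (hF : TriangleFree F)
    (h : IsTriangleComponent (F.erase e) u v w) : ∃ x ∈ ({u, v, w} : Set V), x ∈ e := by
  by_contra! hdisj
  exact hF ⟨u, v, w, h.of_erase hdisj⟩

theorem erase_of_isTriangleComponent_erase [DecidableEq V] {a b c x : V} (hF : TriangleFree F)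
    (h : IsTriangleComponent (F.erase s(a, x)) a b c) : TriangleFree (F.erase s(a, b)) := by
  -- In `F \ {ab}` the path `acb` remains, so a triangle component meeting `ab` contains `b`, whose
  -- only remaining neighbour is `c`.
  have hdeg : degIn (F.erase s(a, x)) b = 2 := h.rotate.degIn_left_eq_two
  obtain ⟨hab, hac, hbc, eab, eac, ebc, -⟩ := h
  have habF := mem_of_mem_erase eab
  have hbx : b ≠ x := fun hbx ↦ ne_of_mem_erase eab (hbx ▸ rfl)
  have hb_deg_one : degIn (F.erase s(a, b)) b = 1 := by
    rw [degIn_erase_of_notMem F (by simp [hab.symm, hbx])] at hdeg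
    have := degIn_erase_add_one habF (Sym2.mem_mk_right a b)
    lia
  rintro ⟨p, q, r, hpqr⟩
  have hac_mem : s(a, c) ∈ F.erase s(a, b) :=
    mem_erase.mpr ⟨by simp [hbc.symm, hac.symm], mem_of_mem_erase eac⟩
  have hcb_mem : s(c, b) ∈ F.erase s(a, b) :=
    mem_erase.mpr ⟨by simp [hbc.symm, hac.symm], Sym2.eq_swap ▸ mem_of_mem_erase ebc⟩
  have hb : b ∈ ({p, q, r} : Set V) := by
    obtain ⟨z, hz, hzab⟩ := hF.exists_mem_of_erase hpqr
    obtain rfl | rfl := Sym2.mem_iff.mp hzab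
    · exact hpqr.mem_of_edge_mem (hpqr.mem_of_edge_mem hz hac_mem) hcb_mem
    · exact hz
  have hb_deg_two := hpqr.degIn_eq_two_of_mem hb
  lia

theorem exists_erase [DecidableEq V] {v : V} (hF : TriangleFree F) (hv : 3 ≤ degIn F v) :
    ∃ e ∈ F, TriangleFree (F.erase e) ∧ ∃ u ∈ e, 3 ≤ degIn F u := by
  obtain ⟨e, he, hve⟩ := degIn_pos.mp (show 0 < degIn F v by lia)
  by_cases hT : TriangleFree (F.erase e)
  · exact ⟨e, he, hT, v, hve, hv⟩
  obtain ⟨p, q, r, hpqr⟩ := not_not.mp hT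
  obtain ⟨a, ha, x, rfl⟩ := hF.exists_mem_of_erase hpqr
  obtain ⟨b, c, habc⟩ := hpqr.exists_of_mem ha
  have hab : s(a, b) ∈ F := mem_of_mem_erase habc.2.2.2.1
  refine ⟨s(a, b), hab, hF.erase_of_isTriangleComponent_erase habc, a, Sym2.mem_mk_left a b, ?_⟩
  rw [← degIn_erase_add_one he (Sym2.mem_mk_left a x), habc.degIn_left_eq_two]

theorem exists_isTwoMatching_card_le_add_excess [Fintype V] (hF : TriangleFree F) :
    ∃ M ⊆ F, IsTwoMatching M ∧ TriangleFree M ∧ #F ≤ #M + excess F := by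
  classical
  induction F using Finset.eraseInduction with
  | H F ih =>
    by_cases hmatch : IsTwoMatching F
    · exact ⟨F, Subset.rfl, hmatch, hF, Nat.le_add_right _ _⟩
    obtain ⟨v, hv⟩ := not_forall.mp hmatch
    obtain ⟨e, he, hFe, u, hue, hu⟩ := hF.exists_erase (not_le.mp hv)
    obtain ⟨M, hMF, hM, hMfree, hcard⟩ := ih e he hFe
    refine ⟨M, hMF.trans (erase_subset e F), hM, hMfree, ?_⟩
    have := card_erase_add_one he
    have := excess_erase_lt he hue hu
    lia

end TriangleFree

theorem IsTwoEdgeCover.exists_isTwoMatching [Fintype V] {H : Finset (Sym2 V)}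
    (hH : IsTwoEdgeCover H) (hfree : TriangleFree H) :
    ∃ M ⊆ H, IsTwoMatching M ∧ TriangleFree M ∧ 2 * Fintype.card V ≤ #H + #M := by
  obtain ⟨M, hMH, hM, hMfree, hcard⟩ := hfree.exists_isTwoMatching_card_le_add_excess
  have := hH.excess_add_two_mul_card_le
  exact ⟨M, hMH, hM, hMfree, by lia⟩

theorem graphOf_adj {F : Finset (Sym2 V)} {u v : V} :
    (graphOf F).Adj u v ↔ s(u, v) ∈ F ∧ u ≠ v :=
  SimpleGraph.fromEdgeSet_adj _

theorem graphOf_erase [DecidableEq V] (F : Finset (Sym2 V)) (e : Sym2 V) :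
    graphOf (F.erase e) = (graphOf F).deleteEdges {e} := by
  simp [graphOf]

theorem TwoEdgeConnected.isTwoEdgeCover {H : Finset (Sym2 V)}
    (hH : TwoEdgeConnected (graphOf H)) : IsTwoEdgeCover H := by
  classical
  obtain ⟨hcard, hconn, hdel⟩ := hH
  have : Finite V := Nat.finite_of_card_ne_zero (by lia)
  have : Nontrivial V := Finite.one_lt_card_iff_nontrivial.mp hcard
  intro v
  obtain ⟨b, hvb⟩ := hconn.preconnected.exists_adj_of_nontrivial v
  have hconn' : (graphOf (H.erase s(v, b))).Connected := graphOf_erase H _ ▸ hdel _ hvb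
  obtain ⟨c, hvc⟩ := hconn'.preconnected.exists_adj_of_nontrivial v
  have := degIn_pos.mpr ⟨s(v, c), (graphOf_adj.mp hvc).1, Sym2.mem_mk_left v c⟩
  have := degIn_erase_add_one (graphOf_adj.mp hvb).1 (Sym2.mem_mk_left v b)
  lia

theorem triangleFree_of_connected {H : Finset (Sym2 V)} (hV : 3 < Nat.card V)
    (hH : (graphOf H).Connected) : TriangleFree H := by
  classical
  rintro ⟨u, v, w, huvw⟩
  have hall (x : V) : x ∈ ({u, v, w} : Set V) := by
    by_contra hx
    obtain ⟨p⟩ := hH.preconnected u x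
    obtain ⟨d, -, hfst, hsnd⟩ := p.exists_boundary_dart {u, v, w} (by simp) hx
    exact hsnd (huvw.mem_of_edge_mem hfst (graphOf_adj.mp d.adj).1)
  have : Nat.card V ≤ 3 :=
    calc Nat.card V = (↑({u, v, w} : Finset V) : Set V).ncard := by
          rw [← Set.ncard_univ]
          simp [← Set.eq_univ_of_forall hall]
      _ = #({u, v, w} : Finset V) := Set.ncard_coe_finset _
      _ ≤ 3 := card_le_three
  lia

theorem twoECSS_lower_bound_general [Fintype V] (G : SimpleGraph V) (ν : ℕ)
    (hν : IsGreatest {n : ℕ | ∃ M : Finset (Sym2 V), (M : Set (Sym2 V)) ⊆ G.edgeSet ∧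
      IsTwoMatching M ∧ TriangleFree M ∧ M.card = n} ν)
    (H : Finset (Sym2 V)) (hHG : (H : Set (Sym2 V)) ⊆ G.edgeSet) (hcover : IsTwoEdgeCover H)
    (hfree : TriangleFree H) : 2 * Fintype.card V - ν ≤ #H := by
  obtain ⟨M, hMH, hM, hMfree, hcard⟩ := hcover.exists_isTwoMatching hfree
  have hMν : #M ≤ ν := hν.2 ⟨M, (coe_subset.mpr hMH).trans hHG, hM, hMfree, rfl⟩
  lia

/-- Let `G` be a finite simple connected graph with minimum
degree at least 2 and `|V| ≥ 4`, having a 2-edge-connected spanning subgraph.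
Then every 2-edge-connected spanning subgraph `H` of `G` satisfies
`|E(H)| ≥ 2|V| - ν`, where `ν` is the maximum size of a triangle-free
2-matching of `G`. -/
theorem twoECSS_lower_bound
    {V : Type*} [Fintype V] (G : SimpleGraph V)
    (hconn : G.Connected)
    (hmin : ∀ v : V, 2 ≤ (G.neighborSet v).ncard)
    (hV : 4 ≤ Fintype.card V)
    (hex : ∃ S : Finset (Sym2 V), (S : Set (Sym2 V)) ⊆ G.edgeSet ∧
      TwoEdgeConnected (graphOf S))
    (ν : ℕ)
    (hν : IsGreatest {n : ℕ | ∃ M : Finset (Sym2 V), (M : Set (Sym2 V)) ⊆ G.edgeSet ∧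
      IsTwoMatching M ∧ TriangleFree M ∧ M.card = n} ν) :
    ∀ H : Finset (Sym2 V), (H : Set (Sym2 V)) ⊆ G.edgeSet →
      TwoEdgeConnected (graphOf H) →
      2 * Fintype.card V - ν ≤ H.card :=
  fun H hHG hH ↦ twoECSS_lower_bound_general G ν hν H hHG hH.isTwoEdgeCover
    (triangleFree_of_connected (by rwa [Nat.card_eq_fintype_card]) hH.2.1)

end ECSS
end

section
/- Let G = (V,E) be a finite simple graph, let F ⊆ E be a triangle-free edge set, let vw ∈ F, and suppose T is a triangle 2EC component of F∖{vw}. Then exactly one of v and w belongs to V(T), and that endpoint has exactly 3 incident edges in F (namely the two edges of T incident to it together with vw). -/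
namespace ECSS

variable {V : Type*}

/-! Deleting `vw` only affects the edges at `v` and at `w`. If neither endpoint lay on the
triangle, the triangle would already be a component of `F`; if both did, `vw` would be an edge of
the triangle, which avoids `vw`. The endpoint that does lie on the triangle is incident to its two
triangle edges and `vw`. -/

section Erase

variable [DecidableEq V] {F : Finset (Sym2 V)} {e : Sym2 V} {v : V}

theorem incident_eq_insert_erase (he : e ∈ F) (hv : v ∈ e) :
    {x ∈ (F : Set (Sym2 V)) | v ∈ x} =
      insert e {x ∈ ((F.erase e : Finset (Sym2 V)) : Set (Sym2 V)) | v ∈ x} := by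
  ext x
  by_cases hx : x = e <;> simp [hx, he, hv]

theorem degIn_eq_degIn_erase_add_one (he : e ∈ F) (hv : v ∈ e) :
    degIn F v = degIn (F.erase e) v + 1 := by
  unfold degIn
  rw [incident_eq_insert_erase he hv]
  exact Set.ncard_insert_of_notMem (by simp) ((F.erase e).finite_toSet.sep _)

end Erase

namespace IsTriangleComponent

variable {F : Finset (Sym2 V)} {a b c x y : V}

theorem rotate_s11 (hT : IsTriangleComponent F a b c) : IsTriangleComponent F b c a := by
  obtain ⟨hab, hac, hbc, hFab, hFac, hFbc, hclosed⟩ := hT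
  refine ⟨hbc, hab.symm, hac.symm, hFbc, Sym2.eq_swap ▸ hFab, Sym2.eq_swap ▸ hFac, ?_⟩
  intro e he hinc
  rw [Sym2.eq_swap (a := b) (b := a), Sym2.eq_swap (a := c) (b := a)]
  have := hclosed e he
  tauto

theorem mk_mem (hT : IsTriangleComponent F a b c) (hx : x ∈ ({a, b, c} : Set V))
    (hy : y ∈ ({a, b, c} : Set V)) (hxy : x ≠ y) : s(x, y) ∈ F := by
  obtain ⟨-, -, -, hFab, hFac, hFbc, -⟩ := hT
  rcases hx with rfl | rfl | rfl <;> rcases hy with rfl | rfl | rfl <;>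
    first
    | exact absurd rfl hxy
    | assumption
    | rwa [Sym2.eq_swap]

theorem incident_eq (hT : IsTriangleComponent F a b c) (hx : x ∈ ({a, b, c} : Set V)) :
    {e ∈ (F : Set (Sym2 V)) | x ∈ e} =
      {e ∈ ({s(a, b), s(a, c), s(b, c)} : Set (Sym2 V)) | x ∈ e} := by
  obtain ⟨-, -, -, hFab, hFac, hFbc, hclosed⟩ := hT
  ext e
  refine and_congr_left fun hxe => ⟨fun he => hclosed e he ?_, ?_⟩
  · rcases hx with rfl | rfl | rfl <;> simp only [hxe, true_or, or_true]
  · rintro (rfl | rfl | rfl) <;> assumption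

theorem incident_eq_pair (hT : IsTriangleComponent F a b c) :
    {e ∈ (F : Set (Sym2 V)) | a ∈ e} = {s(a, b), s(a, c)} := by
  have hbc : a ∉ s(b, c) := by simp [hT.1, hT.2.1]
  rw [hT.incident_eq (Set.mem_insert a _)]
  ext e
  constructor
  · rintro ⟨rfl | rfl | rfl, hae⟩
    · exact Or.inl rfl
    · exact Or.inr rfl
    · exact absurd hae hbc
  · rintro (rfl | rfl) <;> simp

theorem degIn_eq_two (hT : IsTriangleComponent F a b c) (hx : x ∈ ({a, b, c} : Set V)) :
    degIn F x = 2 := by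
  have degIn_first {u v w : V} (h : IsTriangleComponent F u v w) : degIn F u = 2 := by
    unfold degIn
    rw [h.incident_eq_pair]
    exact Set.ncard_pair (mt Sym2.congr_right.mp h.2.2.1)
  rcases hx with rfl | rfl | rfl
  · exact degIn_first hT
  · exact degIn_first hT.rotate_s11
  · exact degIn_first hT.rotate_s11.rotate_s11

variable [DecidableEq V] {e : Sym2 V}

theorem of_erase_s11 (hT : IsTriangleComponent (F.erase e) a b c)
    (he : ∀ x ∈ ({a, b, c} : Set V), x ∉ e) : IsTriangleComponent F a b c := by
  obtain ⟨hab, hac, hbc, hFab, hFac, hFbc, hclosed⟩ := hT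
  refine ⟨hab, hac, hbc, Finset.mem_of_mem_erase hFab, Finset.mem_of_mem_erase hFac,
    Finset.mem_of_mem_erase hFbc, fun f hf hinc => hclosed f (Finset.mem_erase.mpr ⟨?_, hf⟩) hinc⟩
  rintro rfl
  rcases hinc with ha | hb | hc
  · exact he a (by simp) ha
  · exact he b (by simp) hb
  · exact he c (by simp) hc

theorem incident_eq_of_erase (hT : IsTriangleComponent (F.erase e) a b c) (he : e ∈ F)
    (hx : x ∈ ({a, b, c} : Set V)) (hxe : x ∈ e) :
    {f ∈ (F : Set (Sym2 V)) | x ∈ f} =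
      {e} ∪ {f ∈ ({s(a, b), s(a, c), s(b, c)} : Set (Sym2 V)) | x ∈ f} := by
  rw [incident_eq_insert_erase he hxe, hT.incident_eq hx, Set.insert_eq]

theorem degIn_eq_three_of_erase (hT : IsTriangleComponent (F.erase e) a b c) (he : e ∈ F)
    (hx : x ∈ ({a, b, c} : Set V)) (hxe : x ∈ e) : degIn F x = 3 := by
  rw [degIn_eq_degIn_erase_add_one he hxe, hT.degIn_eq_two hx]

end IsTriangleComponent

/-- Let `F ⊆ E(G)` be a triangle-free edge set, let
`vw ∈ F`, and suppose `T` (with vertices `a, b, c`) is a triangle 2EC component of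
`F \ {vw}`. Then exactly one of `v` and `w` belongs to `V(T)`, and that endpoint
has exactly 3 incident edges in `F`, namely the two edges of `T` incident to it
together with `vw`. -/
theorem triangle_component_after_removal
    {V : Type*} [DecidableEq V] (G : SimpleGraph V)
    (F : Finset (Sym2 V)) (hFsub : (F : Set (Sym2 V)) ⊆ G.edgeSet)
    (hFtf : TriangleFree F)
    (v w : V) (hvw : s(v, w) ∈ F)
    (a b c : V) (hT : IsTriangleComponent (F.erase s(v, w)) a b c) :
    (v ∈ ({a, b, c} : Set V) ∧ w ∉ ({a, b, c} : Set V) ∧ degIn F v = 3 ∧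
      {e ∈ (F : Set (Sym2 V)) | v ∈ e} =
        {s(v, w)} ∪ {e ∈ ({s(a, b), s(a, c), s(b, c)} : Set (Sym2 V)) | v ∈ e}) ∨
    (w ∈ ({a, b, c} : Set V) ∧ v ∉ ({a, b, c} : Set V) ∧ degIn F w = 3 ∧
      {e ∈ (F : Set (Sym2 V)) | w ∈ e} =
        {s(v, w)} ∪ {e ∈ ({s(a, b), s(a, c), s(b, c)} : Set (Sym2 V)) | w ∈ e}) := by
  have hne : v ≠ w := G.ne_of_adj (hFsub hvw)
  have hv_mem : v ∈ s(v, w) := Sym2.mem_mk_left v w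
  have hw_mem : w ∈ s(v, w) := Sym2.mem_mk_right v w
  by_cases hv : v ∈ ({a, b, c} : Set V) <;> by_cases hw : w ∈ ({a, b, c} : Set V)
  · exact absurd (hT.mk_mem hv hw hne) (Finset.notMem_erase _ F)
  · exact Or.inl ⟨hv, hw, hT.degIn_eq_three_of_erase hvw hv hv_mem,
      hT.incident_eq_of_erase hvw hv hv_mem⟩
  · exact Or.inr ⟨hw, hv, hT.degIn_eq_three_of_erase hvw hw hw_mem,
      hT.incident_eq_of_erase hvw hw hw_mem⟩
  · refine absurd ⟨a, b, c, hT.of_erase_s11 fun x hx hxe => ?_⟩ hFtf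
    rcases Sym2.mem_iff.mp hxe with rfl | rfl
    · exact hv hx
    · exact hw hx

end ECSS
end
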